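/- Let n ≥ 1, m ∈ ℕ, let A ∈ M_n(ℂ) be Hermitian and let B : Fin m → M_n(ℂ) be a family of Hermitian matrices. Then the function D ↦ log(Re Tr exp(A + ∑_{i} D i • B i)) from (Fin m → ℝ) to ℝ is convex on the whole space (ConvexOn ℝ Set.univ). -/

import Mathlib

open NormedSpace in
lemma aux_spec {n : ℕ} (X : Matrix (Fin n) (Fin n) ℂ) (hX : X.IsHermitian) :
    ∃ (V : Matrix (Fin n) (Fin n) ℂ) (l : Fin n → ℝ), V * star V = 1 ∧ star V * V = 1 ∧
      X = V * Matrix.diagonal (fun i => (l i : ℂ)) * star V := by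
  refine ⟨hX.eigenvectorUnitary, hX.eigenvalues, ?_, ?_, ?_⟩
  · simp
  · simp
  · have := hX.spectral_theorem
    rw [Unitary.conjStarAlgAut_apply] at this
    exact this

open NormedSpace in
lemma aux_exp_conj {n : ℕ} (V X : Matrix (Fin n) (Fin n) ℂ) (h1 : V * star V = 1) :
    exp (V * X * star V) = V * exp X * star V := by
  have hi : V⁻¹ = star V := Matrix.inv_eq_right_inv h1
  have hu : IsUnit V := (Matrix.isUnit_iff_isUnit_det V).2 (Matrix.isUnit_det_of_right_inverse h1)
  rw [← hi]
  exact Matrix.exp_conj V X hu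

open NormedSpace in
lemma aux_exp_diag {n : ℕ} (l : Fin n → ℝ) :
    exp (Matrix.diagonal (fun i => (l i : ℂ))) =
      Matrix.diagonal (fun i => ((Real.exp (l i) : ℝ) : ℂ)) := by
  rw [Matrix.exp_diagonal]
  congr 1
  funext i
  rw [Pi.coe_exp]
  simp [Complex.exp_eq_exp_ℂ]

lemma aux_diag_entry {n : ℕ} (V : Matrix (Fin n) (Fin n) ℂ) (l : Fin n → ℝ) (i : Fin n) :
    ((V * Matrix.diagonal (fun i => (l i : ℂ)) * star V) i i).re =
      ∑ j, Complex.normSq (V i j) * l j := by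
  rw [Matrix.mul_apply, Complex.re_sum]
  refine Finset.sum_congr rfl fun j _ => ?_
  rw [Matrix.mul_diagonal, Matrix.star_apply, mul_right_comm]
  simp only [Complex.star_def, Complex.mul_conj]
  rw [← Complex.ofReal_mul, Complex.ofReal_re]

open NormedSpace in
lemma aux_peierls {n : ℕ} (X : Matrix (Fin n) (Fin n) ℂ) (hX : X.IsHermitian) :
    ∑ i, Real.exp ((X i i).re) ≤ (Matrix.trace (exp X)).re := by
  obtain ⟨V, l, h1, h2, h3⟩ := aux_spec X hX
  rw [Matrix.trace, Complex.re_sum]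
  refine Finset.sum_le_sum fun i _ => ?_
  rw [h3, aux_exp_conj _ _ h1, aux_exp_diag, Matrix.diag_apply, aux_diag_entry, aux_diag_entry]
  have hs : ∑ j, Complex.normSq (V i j) = 1 := by
    have := aux_diag_entry V (fun _ => 1) i
    simp [h1] at this
    exact this.symm
  have := convexOn_exp.map_sum_le (t := Finset.univ) (w := fun j => Complex.normSq (V i j))
    (p := l) (fun j _ => Complex.normSq_nonneg _) hs (fun _ _ => Set.mem_univ _)
  simpa [smul_eq_mul] using this

open NormedSpace in
lemma aux_pos {n : ℕ} (hn : 1 ≤ n) (X : Matrix (Fin n) (Fin n) ℂ) (hX : X.IsHermitian) :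
    0 < (Matrix.trace (exp X)).re := by
  refine lt_of_lt_of_le ?_ (aux_peierls X hX)
  exact Finset.sum_pos (fun i _ => Real.exp_pos _) ⟨⟨0, hn⟩, Finset.mem_univ _⟩

open NormedSpace in
lemma aux_peierls_conj {n : ℕ} (V X : Matrix (Fin n) (Fin n) ℂ) (hX : X.IsHermitian)
    (h1 : V * star V = 1) (h2 : star V * V = 1) :
    ∑ i, Real.exp (((star V * X * V) i i).re) ≤ (Matrix.trace (exp X)).re := by
  have hh : (star V * X * V).IsHermitian := by
    have := Matrix.isHermitian_conjTranspose_mul_mul V hX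
    exact this
  have := aux_peierls _ hh
  have he := aux_exp_conj (star V) X (by rw [star_star]; exact h2)
  rw [star_star] at he
  rwa [he, Matrix.trace_mul_cycle, h1, one_mul] at this

open NormedSpace in
lemma aux_main {n : ℕ} (hn : 1 ≤ n) (X Y : Matrix (Fin n) (Fin n) ℂ) (hX : X.IsHermitian)
    (hY : Y.IsHermitian) (a b : ℝ) (ha : 0 ≤ a) (hb : 0 ≤ b) (hab : a + b = 1) :
    Real.log (Matrix.trace (exp (a • X + b • Y))).re ≤
      a * Real.log (Matrix.trace (exp X)).re + b * Real.log (Matrix.trace (exp Y)).re := by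
  have hM : (a • X + b • Y).IsHermitian := by
    unfold Matrix.IsHermitian
    rw [Matrix.conjTranspose_add, Matrix.conjTranspose_smul, Matrix.conjTranspose_smul, hX.eq,
      hY.eq]
    simp
  have pM := aux_pos hn _ hM
  have pX := aux_pos hn _ hX
  have pY := aux_pos hn _ hY
  obtain ⟨V, l, h1, h2, h3⟩ := aux_spec _ hM
  have qX := aux_peierls_conj V X hX h1 h2
  have qY := aux_peierls_conj V Y hY h1 h2
  have hT : (Matrix.trace (exp (a • X + b • Y))).re = ∑ i, Real.exp (l i) := by
    rw [h3, aux_exp_conj _ _ h1, aux_exp_diag, Matrix.trace_mul_cycle, h2, one_mul,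
      Matrix.trace_diagonal, Complex.re_sum]
    simp only [Complex.ofReal_re]
  have hl : ∀ i, l i = a * ((star V * X * V) i i).re + b * ((star V * Y * V) i i).re := by
    intro i
    have e : star V * (a • X + b • Y) * V = Matrix.diagonal (fun i => (l i : ℂ)) := by
      rw [h3]
      calc _ = (star V * V) * Matrix.diagonal (fun i => (l i : ℂ)) * (star V * V) := by
            simp only [mul_assoc]
        _ = _ := by rw [h2]; simp
    have e2 := congrArg (fun M : Matrix (Fin n) (Fin n) ℂ => (M i i).re) e
    simp only [mul_add, add_mul, Matrix.mul_smul, Matrix.smul_mul, Matrix.add_apply,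
      Matrix.smul_apply, Matrix.diagonal_apply_eq, Complex.add_re, Complex.ofReal_re,
      Complex.smul_re, smul_eq_mul] at e2
    exact e2.symm
  rw [Real.log_le_iff_le_exp pM, hT]
  set S := (Matrix.trace (exp X)).re
  set T := (Matrix.trace (exp Y)).re
  set x := fun i => ((star V * X * V) i i).re
  set y := fun i => ((star V * Y * V) i i).re
  have key : ∀ i, Real.exp (l i) ≤ Real.exp (a * Real.log S + b * Real.log T) *
      (a * (Real.exp (x i) / S) + b * (Real.exp (y i) / T)) := by
    intro i
    have c := convexOn_exp.2 (Set.mem_univ (x i - Real.log S)) (Set.mem_univ (y i - Real.log T))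
      ha hb hab
    simp only [smul_eq_mul, Real.exp_sub, Real.exp_log pX, Real.exp_log pY] at c
    calc Real.exp (l i) = Real.exp (a * Real.log S + b * Real.log T) *
          Real.exp (a * (x i - Real.log S) + b * (y i - Real.log T)) := by
          rw [← Real.exp_add, hl i]
          congr 1
          simp only [x, y]
          ring
      _ ≤ _ := mul_le_mul_of_nonneg_left c (Real.exp_pos _).le
  refine (Finset.sum_le_sum fun i _ => key i).trans ?_
  rw [← Finset.mul_sum, Finset.sum_add_distrib, ← Finset.mul_sum, ← Finset.mul_sum,
    ← Finset.sum_div, ← Finset.sum_div]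
  have r1 : (∑ i, Real.exp (x i)) / S ≤ 1 := (div_le_one pX).2 qX
  have r2 : (∑ i, Real.exp (y i)) / T ≤ 1 := (div_le_one pY).2 qY
  refine mul_le_of_le_one_right (Real.exp_pos _).le ?_
  calc _ ≤ a * 1 + b * 1 := add_le_add (mul_le_mul_of_nonneg_left r1 ha)
        (mul_le_mul_of_nonneg_left r2 hb)
    _ = 1 := by rw [mul_one, mul_one, hab]


open NormedSpace in
/-- Multi-mode version: for `n ≥ 1`, a Hermitian `A ∈ M_n(ℂ)` and a family of Hermitian
matrices `B i`, the function `D ↦ log (Re Tr exp (A + ∑ i, D i • B i))` is convex on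
`(Fin m → ℝ)`. -/
theorem log_trace_exp_multimode_convexOn (n m : ℕ) (hn : 1 ≤ n)
    (A : Matrix (Fin n) (Fin n) ℂ) (hA : A.IsHermitian)
    (B : Fin m → Matrix (Fin n) (Fin n) ℂ) (hB : ∀ i, (B i).IsHermitian) :
    ConvexOn ℝ Set.univ
      (fun D : Fin m → ℝ =>
        Real.log (Matrix.trace (exp (A + ∑ i, D i • B i))).re) := by
  have hH : ∀ D : Fin m → ℝ, (A + ∑ i, D i • B i).IsHermitian := by
    intro D
    unfold Matrix.IsHermitian
    rw [Matrix.conjTranspose_add, Matrix.conjTranspose_sum, hA.eq]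
    congr 1
    refine Finset.sum_congr rfl fun i _ => ?_
    rw [Matrix.conjTranspose_smul, (hB i).eq]
    simp
  refine ⟨convex_univ, fun D _ E _ a b ha hb hab => ?_⟩
  have h := aux_main hn _ _ (hH D) (hH E) a b ha hb hab
  have e : A + ∑ i, (a • D + b • E) i • B i =
      a • (A + ∑ i, D i • B i) + b • (A + ∑ i, E i • B i) := by
    simp only [Pi.add_apply, Pi.smul_apply, smul_eq_mul, add_smul, Finset.sum_add_distrib,
      mul_smul, smul_add, Finset.smul_sum]
    have : A = a • A + b • A := by rw [← add_smul, hab, one_smul]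
    nth_rewrite 1 [this]
    abel
  simp only [smul_eq_mul]
  rw [e]
  exact h
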